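/- Lemma 8: Let a > 0 and d > 0 be reals with 0 < a < d/5, let h_4, h_5, a_2, a_3, a_4, a_5 be real numbers, and let ψ(x_4, x_5) = P·x_4² + B·x_4x_5 + C·x_5² be a positive definite binary real quadratic form whose determinant PC − B²/4 equals d⁵/(2a). Then for all real numbers c_1, …, c_5 there exist x_1, …, x_5 with x_i − c_i ∈ ℤ for every i such that 0 < −a(x_3 + h_4x_4 + h_5x_5)² + (x_1 + a_2x_2 + a_3x_3 + a_4x_4 + a_5x_5)·x_2 − ψ(x_4, x_5) < d. -/

import Mathlib

/-- Uniform one-dimensional covering property: translates of the parabola `α t²` hit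
every open window `(τ, τ+L)` for `τ` in an open interval of length `M`. -/
def RowCov (α L M : ℝ) : Prop :=
  ∃ A : ℝ, ∀ v τ : ℝ, A < τ → τ < A + M → ∃ n : ℤ, τ < α * (n + v)^2 ∧ α * (n + v)^2 < τ + L

lemma exists_near (v : ℝ) : ∃ n : ℤ, -(1/2) ≤ (n:ℝ) + v ∧ (n:ℝ) + v ≤ 1/2 := by
  refine ⟨-round v, ?_⟩
  have := abs_le.1 (abs_sub_round v)
  push_cast
  constructor <;> linarith [this.1, this.2]

lemma rowCov_big {α L : ℝ} (hα : 0 < α) (hL : α ≤ L) : RowCov α L (L^2/(4*α) + L/2) := by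
  refine ⟨α/4 - L, fun v τ h1 h2 => ?_⟩
  have h2' : 4 * α * τ < (L - α)^2 := by
    have e : (α/4 - L + (L^2/(4*α) + L/2)) * (4*α) = (L-α)^2 := by field_simp; ring
    nlinarith
  obtain ⟨n0, hn1, hn2⟩ := exists_near v
  have hex : ∃ j : ℕ, τ < α * ((n0:ℝ) + j + v)^2 := by
    obtain ⟨j, hj⟩ := exists_nat_gt (|τ|/α + 2)
    refine ⟨j, ?_⟩
    have h3 : |τ|/α + 1 < (n0:ℝ) + j + v := by linarith
    have h4 : 0 ≤ |τ|/α := by positivity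
    have h5 : |τ|/α < ((n0:ℝ) + j + v)^2 := by nlinarith
    rw [div_lt_iff₀ hα] at h5
    linarith [le_abs_self τ]
  classical
  by_cases h0 : Nat.find hex = 0
  · have h := Nat.find_spec hex
    rw [h0] at h
    simp only [Nat.cast_zero, add_zero] at h
    refine ⟨n0, h, ?_⟩
    have : ((n0:ℝ)+v)^2 ≤ 1/4 := by nlinarith
    nlinarith
  · obtain ⟨i, hi⟩ := Nat.exists_eq_succ_of_ne_zero h0
    have h := Nat.find_spec hex
    have hm : ¬ τ < α * ((n0:ℝ) + i + v)^2 := Nat.find_min hex (by omega)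
    rw [hi] at h
    refine ⟨n0 + (i+1 : ℕ), ?_, ?_⟩
    · push_cast at h ⊢; exact h
    · push_cast
      push Not at hm
      have hw : α * (2 * ((n0:ℝ) + i + v) + 1) < L := by
        set w := (n0:ℝ) + i + v
        rcases lt_or_ge w 0 with hw | hw
        · nlinarith
        · have : (2*α*w)^2 < (L-α)^2 := by nlinarith
          have := lt_of_pow_lt_pow_left₀ 2 (by linarith) this
          linarith
      nlinarith

lemma rowCov_five {α L : ℝ} (hα : 0 < α) (hL : 5 * α < L) : RowCov α L (L + 6*α) := by
  have key : ∀ v τ : ℝ, α/4 - L < τ → τ < 25/4*α → (∃ n : ℤ, -(1/2) ≤ (n:ℝ) + v ∧ (n:ℝ)+v ≤ 0) →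
      ∃ n : ℤ, τ < α * (n + v)^2 ∧ α * (n + v)^2 < τ + L := by
    rintro v τ h1 h2 ⟨n0, hn1, hn2⟩
    set w := (n0:ℝ) + v with hw
    by_cases c0 : τ < α * w^2
    · refine ⟨n0, c0, ?_⟩
      have : w^2 ≤ 1/4 := by nlinarith
      rw [← hw]; nlinarith
    by_cases c1 : τ < α * (w+1)^2
    · refine ⟨n0+1, ?_, ?_⟩ <;> push_cast <;>
        rw [show (n0:ℝ) + 1 + v = w + 1 by rw [hw]; ring] <;> nlinarith
    by_cases c2 : τ < α * (w+2)^2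
    · refine ⟨n0+2, ?_, ?_⟩ <;> push_cast <;>
        rw [show (n0:ℝ) + 2 + v = w + 2 by rw [hw]; ring] <;> nlinarith
    · have c3 : τ < α * (w+3)^2 := by
        have : 25/4 ≤ (w+3)^2 := by nlinarith
        nlinarith
      refine ⟨n0+3, ?_, ?_⟩ <;> push_cast <;>
        rw [show (n0:ℝ) + 3 + v = w + 3 by rw [hw]; ring] <;> nlinarith
  refine ⟨α/4 - L, fun v τ h1 h2 => ?_⟩
  have h2' : τ < 25/4*α := by linarith
  obtain ⟨n0, hn1, hn2⟩ := exists_near v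
  rcases le_total ((n0:ℝ)+v) 0 with h | h
  · exact key v τ h1 h2' ⟨n0, hn1, h⟩
  · obtain ⟨n, h3, h4⟩ := key (-v) τ h1 h2' ⟨-n0, by push_cast; linarith, by push_cast; linarith⟩
    refine ⟨-n, ?_⟩
    have : α * (((-n : ℤ):ℝ) + v)^2 = α * (n + -v)^2 := by push_cast; ring
    rw [this]; exact ⟨h3, h4⟩

lemma exists_shift {τ L : ℝ} (hL : 1 < L) (A : ℝ) : ∃ N : ℤ, A < τ + N ∧ τ + N < A + L := by
  refine ⟨⌊A - τ⌋ + 1, ?_, ?_⟩ <;> push_cast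
  · linarith [Int.lt_floor_add_one (A - τ)]
  · linarith [Int.floor_le (A - τ)]

lemma stage1 {a d D : ℝ} (ha : 0 < a) (had : 5 * a < d) (hD : 2 * a * D ≤ d^5) :
    ∃ u : ℝ, 0 < u ∧ RowCov a d u ∧ 16 * D ≤ 3 * u^4 := by
  have hd : 0 < d := by linarith
  rcases le_total d (6*a) with h | h
  · refine ⟨d + 6*a, by linarith, rowCov_five ha had, ?_⟩
    have h1 : (2*d)^4 ≤ (d+6*a)^4 := pow_le_pow_left₀ (by linarith) (by linarith) 4
    have h2 : d^5 ≤ 6*a*d^4 := by nlinarith [pow_pos hd 4]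
    have h3 : D ≤ 3*d^4 := by
      by_contra hc
      push Not at hc
      nlinarith
    nlinarith
  · refine ⟨d^2/(4*a) + d/2, by positivity, rowCov_big ha (by linarith), ?_⟩
    obtain ⟨k, rfl⟩ : ∃ k, d = k * a := ⟨d/a, by field_simp⟩
    have hk : 6 ≤ k := by
      by_contra hc; push Not at hc; nlinarith
    have e : (k*a)^2/(4*a) + k*a/2 = (k/4+1/2) * (k*a) := by field_simp
    rw [e]
    have h3 : D ≤ k/2 * (k*a)^4 := by
      by_contra hc
      push Not at hc
      have : 2*a*(k/2 * (k*a)^4) = (k*a)^5 := by ring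
      nlinarith
    have h4 : 8 * k ≤ 3 * (k/4+1/2)^4 := by
      have h5 : 4 ≤ (k/4+1/2)^2 := by nlinarith
      have h6 : (k/4+1/2)^2 * 4 ≤ (k/4+1/2)^4 := by nlinarith
      nlinarith
    have : 0 < (k*a)^4 := by positivity
    rw [mul_pow (k/4+1/2)]
    nlinarith

lemma core3 {a d Q K : ℝ} (ha : 0 < a) (had : 5 * a < d) (hQ : 0 < Q) (hK : 0 < K)
    (hD : 2 * a * (Q * K) ≤ d^5) (hQK : 3 * Q ≤ 4 * K)
    (v1 : ℤ → ℤ → ℝ) (v2 : ℤ → ℝ) (v3 τ : ℝ) :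
    ∃ n m l N : ℤ, τ + N < a * (n + v1 m l)^2 + Q * (m + v2 l)^2 + K * (l + v3)^2 ∧
      a * (n + v1 m l)^2 + Q * (m + v2 l)^2 + K * (l + v3)^2 < τ + N + d := by
  obtain ⟨u, hu, ⟨A1, hA1⟩, hDu⟩ := stage1 ha had hD
  have s1 : ∀ m l N : ℤ, A1 < τ + N - Q * (m + v2 l)^2 - K * (l + v3)^2 →
      τ + N - Q * (m + v2 l)^2 - K * (l + v3)^2 < A1 + u →
      ∃ n m l N : ℤ, τ + N < a * (n + v1 m l)^2 + Q * (m + v2 l)^2 + K * (l + v3)^2 ∧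
      a * (n + v1 m l)^2 + Q * (m + v2 l)^2 + K * (l + v3)^2 < τ + N + d := by
    intro m l N h1 h2
    obtain ⟨n, h3, h4⟩ := hA1 (v1 m l) _ h1 h2
    exact ⟨n, m, l, N, by linarith, by linarith⟩
  rcases lt_or_ge 1 u with hu1 | hu1
  · obtain ⟨N, h1, h2⟩ := exists_shift (τ := τ - Q * (((0:ℤ):ℝ) + v2 0)^2 - K * (((0:ℤ):ℝ) + v3)^2) hu1 A1
    exact s1 0 0 N (by linarith) (by linarith)
  have hQu : Q ≤ u^2/2 := by
    have h : Q^2 ≤ (u^2/2)^2 := by nlinarith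
    exact le_of_not_gt fun hc => by nlinarith [sq_nonneg u]
  have hu2 : u^2 ≤ u := by nlinarith
  obtain ⟨A2, hA2⟩ := rowCov_big hQ (show Q ≤ u by linarith)
  obtain ⟨L2, hL2⟩ : ∃ L2, L2 = u^2/(4*Q) + u/2 := ⟨_, rfl⟩
  rw [← hL2] at hA2
  have s2 : ∀ l N : ℤ, A2 < τ + N - A1 - u - K * (l + v3)^2 →
      τ + N - A1 - u - K * (l + v3)^2 < A2 + L2 →
      ∃ n m l N : ℤ, τ + N < a * (n + v1 m l)^2 + Q * (m + v2 l)^2 + K * (l + v3)^2 ∧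
      a * (n + v1 m l)^2 + Q * (m + v2 l)^2 + K * (l + v3)^2 < τ + N + d := by
    intro l N h1 h2
    obtain ⟨m, h3, h4⟩ := hA2 (v2 l) _ h1 h2
    exact s1 m l N (by linarith) (by linarith)
  rcases lt_or_ge 1 L2 with hL21 | hL21
  · obtain ⟨N, h1, h2⟩ := exists_shift (τ := τ - A1 - u - K * (((0:ℤ):ℝ) + v3)^2) hL21 A2
    exact s2 0 N (by linarith) (by linarith)
  have hL2Q : 4 * Q * L2 = u^2 + 2 * Q * u := by rw [hL2]; field_simp; ring
  have hL2h : (1 + u)/2 ≤ L2 := by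
    by_contra hc; push Not at hc; nlinarith
  have hu4 : u^4 ≤ u^2 := by nlinarith [sq_nonneg u]
  have hKL : K ≤ L2 := by
    by_contra hc; push Not at hc
    have : 4 * Q * L2 < 4 * Q * K := by nlinarith
    nlinarith [mul_pos hQ hu]
  obtain ⟨A3, hA3⟩ := rowCov_big hK hKL
  have hAM : u^3 ≤ 2 * Q * L2^2 := by
    have h : 8 * Q * u^3 ≤ (4 * Q * L2)^2 := by
      rw [hL2Q]; nlinarith [sq_nonneg (u^2 - 2*Q*u)]
    by_contra hc; push Not at hc; nlinarith
  have hK8 : 8 * K ≤ 3 * u * L2^2 := by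
    have h : Q * (8 * K) ≤ Q * (3 * u * L2^2) := by nlinarith
    exact le_of_mul_le_mul_left h hQ
  have hfin : 1 < L2^2/(4*K) + L2/2 := by
    have h1 : 2/(3*u) ≤ L2^2/(4*K) := by
      rw [div_le_div_iff₀ (by positivity) (by positivity)]; linarith
    have h2 : 1 - (1+u)/4 < 2/(3*u) := by
      rw [lt_div_iff₀ (by positivity)]; nlinarith [sq_nonneg (u - 1)]
    linarith
  obtain ⟨N, h1, h2⟩ := exists_shift (τ := τ - A1 - u - A2 - L2) hfin A3
  obtain ⟨l, h3, h4⟩ := hA3 v3 _ h1 h2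
  exact s2 l N (by linarith) (by linarith)

lemma reduce {P B C D : ℝ} (hP : 0 < P) (hC : 0 < C) (hD : 0 < D) (hdet : P * C - B^2/4 = D) :
    ∃ p q r s : ℤ, p * s - q * r = 1 ∧ 0 < P * p^2 + B * p * q + C * q^2 ∧
      3 * (P * p^2 + B * p * q + C * q^2)^2 ≤ 4 * D := by
  let f : ℤ × ℤ → ℝ := fun z => P * z.1^2 + B * z.1 * z.2 + C * z.2^2
  let S : Set (ℤ × ℤ) := {z | IsCoprime z.1 z.2 ∧ f z ≤ P}
  have e1 : ∀ z, D * (z.1:ℝ)^2 ≤ C * f z := fun z => by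
    simp only [f]; rw [← hdet]; nlinarith [sq_nonneg (C * z.2 + B/2 * z.1)]
  have e2 : ∀ z, D * (z.2:ℝ)^2 ≤ P * f z := fun z => by
    simp only [f]; rw [← hdet]; nlinarith [sq_nonneg (P * z.1 + B/2 * z.2)]
  have hfin : S.Finite := by
    obtain ⟨M, hM⟩ := exists_nat_gt (C * P / D + P * P / D)
    apply (Set.finite_Icc ((-(M:ℤ), -(M:ℤ)) : ℤ × ℤ) ((M:ℤ), (M:ℤ))).subset
    have hb : ∀ x : ℤ, ((x:ℝ)^2 < M) → -(M:ℤ) ≤ x ∧ x ≤ M := by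
      intro x hx
      have hx' : x^2 < (M:ℤ) := by exact_mod_cast hx
      constructor <;> nlinarith
    have p1 : 0 < C * P / D := by positivity
    have p2 : 0 < P * P / D := by positivity
    rintro z ⟨-, hz⟩
    have b1 : (z.1:ℝ)^2 < M := by
      have : (z.1:ℝ)^2 ≤ C * P / D := by
        rw [le_div_iff₀ hD]; nlinarith [e1 z]
      linarith
    have b2 : (z.2:ℝ)^2 < M := by
      have : (z.2:ℝ)^2 ≤ P * P / D := by
        rw [le_div_iff₀ hD]; nlinarith [e2 z]
      linarith
    exact ⟨⟨(hb _ b1).1, (hb _ b2).1⟩, ⟨(hb _ b1).2, (hb _ b2).2⟩⟩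
  have h10 : ((1, 0) : ℤ × ℤ) ∈ S := ⟨isCoprime_one_left, by simp [f]⟩
  obtain ⟨⟨p, q⟩, ⟨hc, hle⟩, hmin⟩ := Set.exists_min_image S f hfin ⟨_, h10⟩
  have hmin' : ∀ z : ℤ × ℤ, IsCoprime z.1 z.2 → f (p, q) ≤ f z := by
    intro z hz
    by_cases h : f z ≤ P
    · exact hmin z ⟨hz, h⟩
    · linarith
  obtain ⟨s, r', hsr⟩ := hc
  simp only at hsr
  have hsrR : (s:ℝ) * p + r' * q = 1 := by exact_mod_cast hsr
  have hQ : 0 < f (p, q) := by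
    by_contra hc
    push Not at hc
    have g1 := e1 (p, q)
    have g2 := e2 (p, q)
    simp only at g1 g2
    have hp : (p:ℝ)^2 ≤ 0 := by
      by_contra h; push Not at h; nlinarith [mul_pos hD h]
    have hq : (q:ℝ)^2 ≤ 0 := by
      by_contra h; push Not at h; nlinarith [mul_pos hD h]
    have hp0 : (p:ℝ) = 0 := by nlinarith
    have hq0 : (q:ℝ) = 0 := by nlinarith
    rw [hp0, hq0] at hsrR
    norm_num at hsrR
  refine ⟨p, q, -r', s, by linarith, hQ, ?_⟩
  obtain ⟨Q, hQdef⟩ : ∃ Q, Q = f (p, q) := ⟨_, rfl⟩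
  obtain ⟨B', hB'⟩ : ∃ B', B' = 2*P*p*(-r') + B*(p*s + q*(-r')) + 2*C*q*s := ⟨_, rfl⟩
  obtain ⟨j, hj1, hj2⟩ := exists_near (B'/(2*Q))
  have hm := hmin' (-r' + j*p, s + j*q) ⟨-q, p, by simp only; linarith⟩
  change 3 * (f (p, q))^2 ≤ _
  rw [← hQdef] at hm hQ ⊢
  have id1 : Q * f (-r' + j*p, s + j*q) = Q^2 * (j + B'/(2*Q))^2 + D := by
    have : Q^2 * (j + B'/(2*Q))^2 = (Q*j + B'/2)^2 := by field_simp
    rw [this, hB', hQdef, ← hdet]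
    simp only [f]
    push_cast
    linear_combination (-(P*C - B^2/4)) * ((s:ℝ) * p + r' * q + 1) * hsrR * (-1)
  have h5 : (j + B'/(2*Q))^2 ≤ 1/4 := by nlinarith
  have h6 : Q * Q ≤ Q * f (-r' + j*p, s + j*q) := by nlinarith
  nlinarith [sq_nonneg Q]

lemma core {a d h4 h5 k3 k4 k5 P B C D c3 c4 c5 g : ℝ} (ha : 0 < a) (had : 5 * a < d)
    (hP : 0 < P) (hC : 0 < C) (hD : 0 < D) (hdet : P * C - B^2/4 = D)
    (hDd : 2 * a * D ≤ d^5) :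
    ∃ n i j N : ℤ,
      0 < N + g + k3 * (c3 + n) + k4 * (c4 + i) + k5 * (c5 + j)
        - a * ((c3 + n) + h4 * (c4 + i) + h5 * (c5 + j))^2
        - (P * (c4 + i)^2 + B * (c4 + i) * (c5 + j) + C * (c5 + j)^2) ∧
      N + g + k3 * (c3 + n) + k4 * (c4 + i) + k5 * (c5 + j)
        - a * ((c3 + n) + h4 * (c4 + i) + h5 * (c5 + j))^2
        - (P * (c4 + i)^2 + B * (c4 + i) * (c5 + j) + C * (c5 + j)^2) < d := by
  obtain ⟨p, q, r, s, hdet1, hQ, hQD⟩ := reduce hP hC hD hdet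
  have hdR : (p:ℝ) * s - q * r = 1 := by exact_mod_cast hdet1
  obtain ⟨Q, hQdef⟩ : ∃ Q, Q = P * (p:ℝ)^2 + B * p * q + C * q^2 := ⟨_, rfl⟩
  rw [← hQdef] at hQ hQD
  obtain ⟨B', hB'⟩ : ∃ B', B' = 2*P*p*r + B*(p*s + q*r) + 2*C*q*s := ⟨_, rfl⟩
  obtain ⟨C', hC'⟩ : ∃ C', C' = P * (r:ℝ)^2 + B * r * s + C * s^2 := ⟨_, rfl⟩
  have hD' : Q * C' - B'^2/4 = D := by
    rw [hQdef, hB', hC', ← hdet]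
    linear_combination (P*C - B^2/4) * ((p:ℝ) * s - q * r + 1) * hdR
  have hsq : ∀ M Λ : ℝ, P * (p*M + r*Λ)^2 + B * (p*M+r*Λ) * (q*M+s*Λ) + C * (q*M+s*Λ)^2
      = Q * (M + B'/(2*Q) * Λ)^2 + D/Q * Λ^2 := by
    intro M Λ
    have : Q * (M + B'/(2*Q) * Λ)^2 + D/Q * Λ^2 = Q * M^2 + B' * M * Λ + C' * Λ^2 := by
      rw [← hD']; field_simp; ring
    rw [this, hQdef, hB', hC']; ring
  obtain ⟨κ4, hκ4⟩ : ∃ x, x = k4 - k3 * h4 := ⟨_, rfl⟩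
  obtain ⟨κ5, hκ5⟩ : ∃ x, x = k5 - k3 * h5 := ⟨_, rfl⟩
  obtain ⟨e4, he4⟩ : ∃ x, x = (2*C*κ4 - B*κ5)/(4*D) := ⟨_, rfl⟩
  obtain ⟨e5, he5⟩ : ∃ x, x = (2*P*κ5 - B*κ4)/(4*D) := ⟨_, rfl⟩
  have hDne : D ≠ 0 := hD.ne'
  have E4 : 2*P*e4 + B*e5 = κ4 := by
    rw [he4, he5]; field_simp; rw [← hdet]; ring
  have E5 : B*e4 + 2*C*e5 = κ5 := by
    rw [he4, he5]; field_simp; rw [← hdet]; ring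
  obtain ⟨m0, hm0⟩ : ∃ x, x = (c4 - e4) * s - (c5 - e5) * r := ⟨_, rfl⟩
  obtain ⟨l0, hl0⟩ : ∃ x, x = p * (c5 - e5) - q * (c4 - e4) := ⟨_, rfl⟩
  have y4 : p * m0 + r * l0 = c4 - e4 := by
    rw [hm0, hl0]; linear_combination (c4 - e4) * hdR
  have y5 : q * m0 + s * l0 = c5 - e5 := by
    rw [hm0, hl0]; linear_combination (c5 - e5) * hdR
  obtain ⟨G, hG⟩ : ∃ x, x = g + k3^2/(4*a) + (P*e4^2 + B*e4*e5 + C*e5^2) := ⟨_, rfl⟩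
  have hKD : Q * (D/Q) = D := by field_simp
  obtain ⟨n, m, l, N, h1, h2⟩ := core3 (K := D/Q) ha had hQ (by positivity) (by rw [hKD]; exact hDd)
    (by
      have : 4 * (D/Q) = (4*D)/Q := by ring
      rw [this, le_div_iff₀ hQ]; linarith)
    (fun m l => c3 + h4 * (c4 + (p*m+r*l)) + h5 * (c5 + (q*m+s*l)) - k3/(2*a))
    (fun l => m0 + B'/(2*Q) * (l + l0)) l0 (G - d)
  have main : N + g + k3 * (c3 + n) + k4 * (c4 + (p*m+r*l)) + k5 * (c5 + (q*m+s*l))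
        - a * ((c3 + n) + h4 * (c4 + (p*m+r*l)) + h5 * (c5 + (q*m+s*l)))^2
        - (P * (c4 + (p*m+r*l))^2 + B * (c4 + (p*m+r*l)) * (c5 + (q*m+s*l)) + C * (c5 + (q*m+s*l))^2)
      = N + G - (a * (n + (c3 + h4 * (c4 + (p*m+r*l)) + h5 * (c5 + (q*m+s*l)) - k3/(2*a)))^2
        + Q * (m + (m0 + B'/(2*Q) * (l + l0)))^2 + D/Q * (l + l0)^2) := by
    have t1 := hsq (m + m0) (l + l0)
    have t2 : (p:ℝ) * (m + m0) + r * (l + l0) = c4 + (p*m+r*l) - e4 := by linear_combination y4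
    have t3 : (q:ℝ) * (m + m0) + s * (l + l0) = c5 + (q*m+s*l) - e5 := by linear_combination y5
    rw [t2, t3] at t1
    generalize (p:ℝ)*m+r*l = X at *
    generalize (q:ℝ)*m+s*l = Y at *
    have t4 : a * (n + (c3 + h4 * (c4 + X) + h5 * (c5 + Y) - k3/(2*a)))^2 =
        a * ((c3 + n) + h4 * (c4 + X) + h5 * (c5 + Y))^2
        - k3 * ((c3 + n) + h4 * (c4 + X) + h5 * (c5 + Y)) + k3^2/(4*a) := by
      field_simp; ring
    rw [t4, ← add_assoc (m:ℝ) m0, add_assoc _ (Q * _) (D/Q * _), ← t1, hG]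
    rw [hκ4] at E4
    rw [hκ5] at E5
    linear_combination (-(c4 + X)) * E4 + (-(c5+Y)) * E5
  refine ⟨n, p*m+r*l, q*m+s*l, N, ?_⟩
  push_cast
  rw [main]
  constructor <;> linarith


/-- Lemma 8: if `0 < a < d/5` and `ψ(x₄,x₅) = P·x₄² + B·x₄x₅ + C·x₅²` is a positive
definite binary form of determinant `PC − B²/4 = d⁵/(2a)`, then for all reals
`c₁,…,c₅` the inequality
`0 < −a(x₃+h₄x₄+h₅x₅)² + (x₁+a₂x₂+a₃x₃+a₄x₄+a₅x₅)x₂ − ψ(x₄,x₅) < d`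
is soluble with `xᵢ ≡ cᵢ (mod 1)`. -/
theorem lemma8 (a d h₄ h₅ a₂ a₃ a₄ a₅ P B C : ℝ)
    (ha : 0 < a) (hd : 0 < d) (had : a < d / 5)
    (hposdef : ∀ u v : ℝ, ¬(u = 0 ∧ v = 0) → 0 < P * u^2 + B * u * v + C * v^2)
    (hdet : P * C - B^2 / 4 = d^5 / (2 * a))
    (c₁ c₂ c₃ c₄ c₅ : ℝ) :
    ∃ x₁ x₂ x₃ x₄ x₅ : ℝ,
      (∃ k : ℤ, x₁ - c₁ = k) ∧ (∃ k : ℤ, x₂ - c₂ = k) ∧ (∃ k : ℤ, x₃ - c₃ = k) ∧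
      (∃ k : ℤ, x₄ - c₄ = k) ∧ (∃ k : ℤ, x₅ - c₅ = k) ∧
      0 < -a * (x₃ + h₄*x₄ + h₅*x₅)^2 + (x₁ + a₂*x₂ + a₃*x₃ + a₄*x₄ + a₅*x₅) * x₂
            - (P * x₄^2 + B * x₄ * x₅ + C * x₅^2) ∧
      -a * (x₃ + h₄*x₄ + h₅*x₅)^2 + (x₁ + a₂*x₂ + a₃*x₃ + a₄*x₄ + a₅*x₅) * x₂
            - (P * x₄^2 + B * x₄ * x₅ + C * x₅^2) < d := by
  have hP : 0 < P := by have := hposdef 1 0 (by norm_num); norm_num at this; exact this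
  have hC : 0 < C := by have := hposdef 0 1 (by norm_num); norm_num at this; exact this
  obtain ⟨μ, hμ⟩ : ∃ μ, μ = c₂ - ⌈c₂⌉ + 1 := ⟨_, rfl⟩
  have hμ0 : 0 < μ := by linarith [Int.ceil_lt_add_one c₂]
  have hμ1 : μ ≤ 1 := by linarith [Int.le_ceil c₂]
  have hD : 0 < d^5/(2*a) := by positivity
  obtain ⟨n, i, j, N, h1, h2⟩ := core (a := a/μ) (d := d/μ) (h4 := h₄) (h5 := h₅) (k3 := a₃)
    (k4 := a₄) (k5 := a₅) (P := P/μ) (B := B/μ) (C := C/μ) (D := d^5/(2*a)/μ^2)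
    (c3 := c₃) (c4 := c₄) (c5 := c₅) (g := c₁ + a₂ * μ) (by positivity)
    (by rw [← mul_div_assoc]; exact div_lt_div_of_pos_right (by linarith) hμ0)
    (by positivity) (by positivity) (by positivity)
    (by rw [← hdet]; field_simp)
    (by
      have e : 2 * (a/μ) * (d^5/(2*a)/μ^2) = d^5/μ^3 := by field_simp
      rw [e, div_pow]
      apply div_le_div_of_nonneg_left (by positivity) (by positivity)
      exact pow_le_pow_of_le_one hμ0.le hμ1 (by norm_num))
  have e : -a * ((c₃ + n) + h₄*(c₄ + i) + h₅*(c₅ + j))^2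
      + ((c₁ + N) + a₂*μ + a₃*(c₃ + n) + a₄*(c₄ + i) + a₅*(c₅ + j)) * μ
      - (P * (c₄ + i)^2 + B * (c₄ + i) * (c₅ + j) + C * (c₅ + j)^2)
      = μ * (N + (c₁ + a₂ * μ) + a₃ * (c₃ + n) + a₄ * (c₄ + i) + a₅ * (c₅ + j)
        - a/μ * ((c₃ + n) + h₄ * (c₄ + i) + h₅ * (c₅ + j))^2
        - (P/μ * (c₄ + i)^2 + B/μ * (c₄ + i) * (c₅ + j) + C/μ * (c₅ + j)^2)) := by
    field_simp; ring
  refine ⟨c₁ + N, μ, c₃ + n, c₄ + i, c₅ + j, ⟨N, by ring⟩, ⟨-⌈c₂⌉ + 1, by rw [hμ]; push_cast; ring⟩,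
    ⟨n, by ring⟩, ⟨i, by ring⟩, ⟨j, by ring⟩, ?_, ?_⟩
  · rw [e]; exact mul_pos hμ0 h1
  · rw [e]
    rw [lt_div_iff₀ hμ0] at h2
    linarith
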